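/- Let n ≥ 1, let V : ℝⁿ → ℝ be bounded, continuous and satisfy V(x) > 0 for all x, and let u : [0,∞) × ℝⁿ → ℝ be a smooth solution of ∂ₜ²u − Δₓu + V·u = 0 with u(0,·) = u₀ ∈ Cc^∞(ℝⁿ), ∂ₜu(0,·) = u₁ ∈ Cc^∞(ℝⁿ), such that for every T > 0 there is R > 0 with u(t,·) supported in the ball of radius R for all t ∈ [0,T]. Assume ∫_{ℝⁿ} |u₁(x)|²/V(x) dx < ∞ and define v(t,x) := ∫₀ᵗ u(s,x) ds. Then for all t ≥ 0: ½‖u(t,·)‖² + ½‖∇ₓv(t,·)‖² + ¼∫_{ℝⁿ} V(x)|v(t,x)|² dx ≤ ½‖u₀‖² + ∫_{ℝⁿ} |u₁(x)|²/V(x) dx. -/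

import Mathlib

open MeasureTheory

noncomputable section

/-- The Laplacian of `f : ℝⁿ → ℝ`, as the sum of second derivatives in the
coordinate directions. -/
def lap {n : ℕ} (f : EuclideanSpace ℝ (Fin n) → ℝ) (x : EuclideanSpace ℝ (Fin n)) : ℝ :=
  ∑ i : Fin n, iteratedFDeriv ℝ 2 f x ![EuclideanSpace.single i 1, EuclideanSpace.single i 1]

/-!
Integrating the equation in time shows that `v = ∫₀ᵗ u` solves `∂ₜ²v - Δv + V v = u₁`, a wave
equation with a static source. Hence the density `½ u² + ½ |∇v|² + ½ V v² - u₁ v` has time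
derivative `div (u ∇v)`, and its integral keeps the initial value `½ ‖u₀‖²`. The estimate follows
from `u₁ v ≤ u₁² / V + ¼ V v²`.
-/

open Set Function InnerProductSpace
open scoped Interval Laplacian Gradient

section TimePrimitive

variable {E F G : Type*} [NormedAddCommGroup F] [NormedSpace ℝ F]
  [NormedAddCommGroup G] [NormedSpace ℝ G]

/-- The primitive `∫₀ᵗ u(s, x) ds` in time, vanishing at time `0`, of a function `u` of time and
space. -/
def timePrimitive (u : ℝ → E → F) (t : ℝ) (x : E) : F := ∫ s in (0 : ℝ)..t, u s x

@[simp]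
lemma timePrimitive_zero (u : ℝ → E → F) (x : E) : timePrimitive u 0 x = 0 :=
  intervalIntegral.integral_same

lemma timePrimitive_eq_zero {u : ℝ → E → F} {t : ℝ} {x : E} (h : ∀ s ∈ [[0, t]], u s x = 0) :
    timePrimitive u t x = 0 :=
  (intervalIntegral.integral_congr h).trans intervalIntegral.integral_zero

section Continuous

variable [TopologicalSpace E] {u : ℝ → E → F}

lemma continuous_uncurry_timePrimitive (hu : Continuous ↿u) : Continuous ↿(timePrimitive u) :=
  intervalIntegral.continuous_parametric_intervalIntegral_of_continuous
    (f := fun (p : ℝ × E) s ↦ u s p.2) (by fun_prop) continuous_fst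

lemma hasDerivAt_timePrimitive [CompleteSpace F] (hu : Continuous ↿u) (t : ℝ) (x : E) :
    HasDerivAt (fun s ↦ timePrimitive u s x) (u t x) t :=
  (show Continuous fun s ↦ u s x by fun_prop).integral_hasStrictDerivAt 0 t |>.hasDerivAt

lemma timePrimitive_clm_apply [CompleteSpace F] [CompleteSpace G] (hu : Continuous ↿u)
    (L : F →L[ℝ] G) (t : ℝ) (x : E) :
    timePrimitive (fun s y ↦ L (u s y)) t x = L (timePrimitive u t x) :=
  L.intervalIntegral_comp_comm (Continuous.intervalIntegrable (by fun_prop) 0 t)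

end Continuous

variable [NormedAddCommGroup E] [NormedSpace ℝ E] {u : ℝ → E → F}

lemma contDiff_uncurry_fderiv {m n : WithTop ℕ∞} (hu : ContDiff ℝ n ↿u) (hmn : m + 1 ≤ n) :
    ContDiff ℝ m ↿(fun s ↦ fderiv ℝ (u s)) :=
  ContDiff.fderiv (f := fun p : ℝ × E ↦ u p.1)
    (hu.comp (contDiff_fst.fst.prodMk contDiff_snd)) contDiff_snd hmn

lemma continuous_uncurry_fderiv (hu : ContDiff ℝ 1 ↿u) : Continuous ↿(fun s ↦ fderiv ℝ (u s)) :=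
  (contDiff_uncurry_fderiv (m := 0) hu (zero_add 1).le).continuous

lemma contDiff_of_uncurry {n : WithTop ℕ∞} (hu : ContDiff ℝ n ↿u) (t : ℝ) : ContDiff ℝ n (u t) :=
  hu.comp (contDiff_prodMk_right t)

lemma continuous_deriv_apply (hu : ContDiff ℝ 1 ↿u) (t : ℝ) :
    Continuous fun x ↦ deriv (fun s ↦ u s x) t := by
  have hswap : ContDiff ℝ 1 (uncurry fun (x : E) s ↦ u s x) :=
    hu.comp (contDiff_snd.prodMk contDiff_fst)
  exact (hswap.fderiv (contDiff_const (c := t)) (zero_add 1).le).continuous.clm_apply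
    continuous_const

variable [ProperSpace E]

lemma hasFDerivAt_timePrimitive (hu : ContDiff ℝ 1 ↿u) (t : ℝ) (x : E) :
    HasFDerivAt (timePrimitive u t) (timePrimitive (fun s ↦ fderiv ℝ (u s)) t x) x := by
  have hc : Continuous ↿u := hu.continuous
  have hd : Continuous ↿(fun s ↦ fderiv ℝ (u s)) := continuous_uncurry_fderiv hu
  obtain ⟨C, hC⟩ := (isCompact_uIcc.prod (isCompact_closedBall x 1)).exists_bound_of_continuousOn
    (hd.continuousOn (s := [[0, t]] ×ˢ Metric.closedBall x 1))
  refine intervalIntegral.hasFDerivAt_integral_of_dominated_of_fderiv_le (bound := fun _ ↦ C)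
    (Metric.closedBall_mem_nhds x one_pos) (.of_forall fun y ↦ ?_) ?_ ?_
    (.of_forall fun s hs y hy ↦ hC (s, y) ⟨uIoc_subset_uIcc hs, hy⟩) intervalIntegrable_const
    (.of_forall fun s _ y _ ↦
      ((contDiff_of_uncurry hu s).differentiable one_ne_zero y).hasFDerivAt)
  · exact (show Continuous fun s ↦ u s y by fun_prop).aestronglyMeasurable
  · exact (show Continuous fun s ↦ u s x by fun_prop).intervalIntegrable 0 t
  · exact (show Continuous fun s ↦ fderiv ℝ (u s) x by fun_prop).aestronglyMeasurable

lemma fderiv_timePrimitive (hu : ContDiff ℝ 1 ↿u) (t : ℝ) :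
    fderiv ℝ (timePrimitive u t) = timePrimitive (fun s ↦ fderiv ℝ (u s)) t :=
  funext fun x ↦ (hasFDerivAt_timePrimitive hu t x).fderiv

lemma contDiff_one_timePrimitive (hu : ContDiff ℝ 1 ↿u) (t : ℝ) :
    ContDiff ℝ 1 (timePrimitive u t) := by
  have hd : Continuous ↿(fun s ↦ fderiv ℝ (u s)) := continuous_uncurry_fderiv hu
  refine contDiff_one_iff_fderiv.2
    ⟨fun x ↦ (hasFDerivAt_timePrimitive hu t x).differentiableAt, ?_⟩
  rw [fderiv_timePrimitive hu]
  exact (continuous_uncurry_timePrimitive hd).comp (Continuous.prodMk_right t)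

lemma contDiff_two_timePrimitive (hu : ContDiff ℝ 2 ↿u) (t : ℝ) :
    ContDiff ℝ 2 (timePrimitive u t) := by
  have hu₁ : ContDiff ℝ 1 ↿u := hu.of_le one_le_two
  refine (contDiff_succ_iff_fderiv (n := 1)).2
    ⟨(contDiff_one_timePrimitive hu₁ t).differentiable one_ne_zero, by simp, ?_⟩
  rw [fderiv_timePrimitive hu₁]
  exact contDiff_one_timePrimitive (contDiff_uncurry_fderiv hu le_rfl) t

end TimePrimitive

section GradientLaplacian

variable {E : Type*} [NormedAddCommGroup E] [InnerProductSpace ℝ E]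

section Gradient

variable [CompleteSpace E]

lemma gradient_eq_zero_of_notMem_tsupport {f : E → ℝ} {x : E} (hx : x ∉ tsupport f) :
    ∇ f x = 0 := by
  rw [gradient, fderiv_of_notMem_tsupport ℝ hx, map_zero]

lemma continuous_uncurry_gradient {u : ℝ → E → ℝ} (hu : ContDiff ℝ 1 ↿u) :
    Continuous ↿(fun s ↦ ∇ (u s)) :=
  (toDual ℝ E).symm.continuous.comp (continuous_uncurry_fderiv hu)

end Gradient

variable [FiniteDimensional ℝ E]

/-- The trace of a continuous bilinear form with respect to the inner product, as a continuous
linear functional. It expresses the Laplacian as a linear function of the second derivative. -/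
def traceCLM : (E →L[ℝ] E →L[ℝ] ℝ) →L[ℝ] ℝ :=
  ∑ i, (ContinuousLinearMap.apply ℝ ℝ (stdOrthonormalBasis ℝ E i)).comp
    (ContinuousLinearMap.apply ℝ (E →L[ℝ] ℝ) (stdOrthonormalBasis ℝ E i))

lemma traceCLM_apply (B : E →L[ℝ] E →L[ℝ] ℝ) :
    traceCLM B = ∑ i, B (stdOrthonormalBasis ℝ E i) (stdOrthonormalBasis ℝ E i) := by
  simp [traceCLM]

lemma laplacian_eq_traceCLM (f : E → ℝ) (x : E) :
    Δ f x = traceCLM (fderiv ℝ (fderiv ℝ f) x) := by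
  simp [laplacian_eq_iteratedFDeriv_stdOrthonormalBasis, iteratedFDeriv_two_apply, traceCLM_apply]

lemma laplacian_eq_sum_fderiv_fderiv_apply {ι : Type*} [Fintype ι] (b : OrthonormalBasis ι ℝ E)
    {f : E → ℝ} (hf : ContDiff ℝ 2 f) (x : E) :
    Δ f x = ∑ i, fderiv ℝ (fun y ↦ fderiv ℝ f y (b i)) x (b i) := by
  have hd : DifferentiableAt ℝ (fderiv ℝ f) x :=
    (hf.fderiv_right (m := 1) one_add_one_eq_two.le).differentiable one_ne_zero x
  simp [laplacian_eq_iteratedFDeriv_orthonormalBasis f b, iteratedFDeriv_two_apply,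
    fderiv_clm_apply hd]

lemma inner_gradient_gradient_eq_sum {ι : Type*} [Fintype ι] (b : OrthonormalBasis ι ℝ E)
    (f g : E → ℝ) (x : E) :
    ⟪∇ f x, ∇ g x⟫_ℝ = ∑ i, fderiv ℝ f x (b i) * fderiv ℝ g x (b i) := by
  rw [← b.sum_inner_mul_inner]
  simp only [inner_gradient_left, inner_gradient_right, conj_trivial]

lemma continuous_uncurry_laplacian {u : ℝ → E → ℝ} (hu : ContDiff ℝ 2 ↿u) :
    Continuous ↿(fun s ↦ Δ (u s)) := by
  have hd : ContDiff ℝ 1 ↿(fun s ↦ fderiv ℝ (u s)) := contDiff_uncurry_fderiv hu le_rfl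
  have hdd : Continuous ↿(fun s ↦ fderiv ℝ (fderiv ℝ (u s))) :=
    continuous_uncurry_fderiv hd
  refine (traceCLM.continuous.comp hdd).congr fun p ↦ ?_
  exact (laplacian_eq_traceCLM (u p.1) p.2).symm

lemma gradient_timePrimitive {u : ℝ → E → ℝ} (hu : ContDiff ℝ 1 ↿u) (t : ℝ) :
    ∇ (timePrimitive u t) = timePrimitive (fun s ↦ ∇ (u s)) t := by
  refine funext fun x ↦ ext_inner_left ℝ fun y ↦ ?_
  calc ⟪y, ∇ (timePrimitive u t) x⟫_ℝ
      = timePrimitive (fun s ↦ fderiv ℝ (u s)) t x y := by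
        rw [inner_gradient_right, fderiv_timePrimitive hu, conj_trivial]
    _ = timePrimitive (fun s z ↦ ⟪y, ∇ (u s) z⟫_ℝ) t x := by
        simp only [inner_gradient_right, conj_trivial]
        exact (timePrimitive_clm_apply (continuous_uncurry_fderiv hu)
          (ContinuousLinearMap.apply ℝ ℝ y) t x).symm
    _ = ⟪y, timePrimitive (fun s ↦ ∇ (u s)) t x⟫_ℝ :=
        timePrimitive_clm_apply (continuous_uncurry_gradient hu) (innerSL ℝ y) t x

lemma laplacian_timePrimitive {u : ℝ → E → ℝ} (hu : ContDiff ℝ 2 ↿u) (t : ℝ) :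
    Δ (timePrimitive u t) = timePrimitive (fun s ↦ Δ (u s)) t := by
  have hd : ContDiff ℝ 1 ↿(fun s ↦ fderiv ℝ (u s)) := contDiff_uncurry_fderiv hu le_rfl
  have hfderiv_fderiv : fderiv ℝ (fderiv ℝ (timePrimitive u t)) =
      timePrimitive (fun s ↦ fderiv ℝ (fderiv ℝ (u s))) t := by
    rw [fderiv_timePrimitive (hu.of_le one_le_two), fderiv_timePrimitive hd]
  ext x
  calc Δ (timePrimitive u t) x
      = traceCLM (timePrimitive (fun s ↦ fderiv ℝ (fderiv ℝ (u s))) t x) := by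
        rw [laplacian_eq_traceCLM, hfderiv_fderiv]
    _ = timePrimitive (fun s y ↦ traceCLM (fderiv ℝ (fderiv ℝ (u s)) y)) t x :=
        (timePrimitive_clm_apply (u := fun s ↦ fderiv ℝ (fderiv ℝ (u s)))
          (continuous_uncurry_fderiv hd) traceCLM t x).symm
    _ = timePrimitive (fun s ↦ Δ (u s)) t x := by simp only [← laplacian_eq_traceCLM]

lemma integrable_norm_gradient_sq [MeasurableSpace E] [OpensMeasurableSpace E] {μ : Measure E}
    [IsFiniteMeasureOnCompacts μ] {f : E → ℝ} (hf : ContDiff ℝ 1 f) (hfc : HasCompactSupport f) :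
    Integrable (fun x ↦ ‖∇ f x‖ ^ 2) μ := by
  simp only [gradient, LinearIsometryEquiv.norm_map]
  have hcont : Continuous fun x ↦ ‖fderiv ℝ f x‖ ^ 2 :=
    (hf.continuous_fderiv one_ne_zero).norm.pow 2
  have hsupp : HasCompactSupport fun x ↦ ‖fderiv ℝ f x‖ ^ 2 :=
    (hfc.fderiv ℝ).comp_left (g := fun L : StrongDual ℝ E ↦ ‖L‖ ^ 2) (by simp)
  exact hcont.integrable_of_hasCompactSupport hsupp

end GradientLaplacian

section IntegrationByParts

section

variable {E : Type*} [NormedAddCommGroup E] [NormedSpace ℝ E] [FiniteDimensional ℝ E]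
  [MeasurableSpace E] [BorelSpace E] (μ : Measure E) [μ.IsAddHaarMeasure]

theorem integral_mul_fderiv_eq_neg_of_hasCompactSupport {f g : E → ℝ} (hf : ContDiff ℝ 1 f)
    (hfc : HasCompactSupport f) (hg : ContDiff ℝ 1 g) (v : E) :
    ∫ x, f x * fderiv ℝ g x v ∂μ = -∫ x, fderiv ℝ f x v * g x ∂μ := by
  have hf' : Continuous fun x ↦ fderiv ℝ f x v := (hf.continuous_fderiv_apply one_ne_zero).comp
    (Continuous.prodMk_left v)
  have hg' : Continuous fun x ↦ fderiv ℝ g x v := by fun_prop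
  refine integral_mul_fderiv_eq_neg_fderiv_mul_of_integrable ?_ ?_ ?_
    (fun x _ ↦ hf.differentiable one_ne_zero x) (fun x _ ↦ hg.differentiable one_ne_zero x)
  · exact (hf'.mul hg.continuous).integrable_of_hasCompactSupport (hfc.fderiv_apply ℝ v).mul_right
  · exact (hf.continuous.mul hg').integrable_of_hasCompactSupport hfc.mul_right
  · exact (hf.continuous.mul hg.continuous).integrable_of_hasCompactSupport hfc.mul_right

end

variable {E : Type*} [NormedAddCommGroup E] [InnerProductSpace ℝ E] [FiniteDimensional ℝ E]
  [MeasurableSpace E] [BorelSpace E] (μ : Measure E) [μ.IsAddHaarMeasure]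

theorem integral_mul_laplacian_add_inner_gradient {f g : E → ℝ} (hf : ContDiff ℝ 1 f)
    (hfc : HasCompactSupport f) (hg : ContDiff ℝ 2 g) :
    ∫ x, (f x * Δ g x + ⟪∇ f x, ∇ g x⟫_ℝ) ∂μ = 0 := by
  let b := stdOrthonormalBasis ℝ E
  have hgi (i) : ContDiff ℝ 1 fun x ↦ fderiv ℝ g x (b i) :=
    (hg.fderiv_right (m := 1) one_add_one_eq_two.le).clm_apply contDiff_const
  have hfΔ (i) : Integrable (fun x ↦ f x * fderiv ℝ (fun y ↦ fderiv ℝ g y (b i)) x (b i)) μ :=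
    (hf.continuous.mul (((hgi i).continuous_fderiv one_ne_zero).clm_apply
      continuous_const)).integrable_of_hasCompactSupport hfc.mul_right
  have hgrad (i) : Integrable (fun x ↦ fderiv ℝ f x (b i) * fderiv ℝ g x (b i)) μ :=
    (((hf.continuous_fderiv one_ne_zero).clm_apply continuous_const).mul
      (hgi i).continuous).integrable_of_hasCompactSupport (hfc.fderiv_apply ℝ (b i)).mul_right
  simp only [laplacian_eq_sum_fderiv_fderiv_apply b hg, inner_gradient_gradient_eq_sum b,
    Finset.mul_sum, ← Finset.sum_add_distrib]
  rw [integral_finsetSum _ fun i _ ↦ by exact (hfΔ i).add (hgrad i)]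
  refine Finset.sum_eq_zero fun i _ ↦ ?_
  rw [integral_add (hfΔ i) (hgrad i),
    integral_mul_fderiv_eq_neg_of_hasCompactSupport μ hf hfc (hgi i), neg_add_cancel]

end IntegrationByParts

section Fubini

variable {X F : Type*} [TopologicalSpace X] [T2Space X] [SecondCountableTopology X]
  [MeasurableSpace X] [OpensMeasurableSpace X]
  [NormedAddCommGroup F] {μ : Measure X} [IsFiniteMeasureOnCompacts μ] [SFinite μ]

lemma integrable_uncurry_of_support_subset {g : ℝ → X → F} {a b : ℝ} {K : Set X}
    (hK : IsCompact K) (hg : Continuous ↿g)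
    (hgK : ∀ t ∈ [[a, b]], support (g t) ⊆ K) :
    Integrable ↿g ((volume.restrict (Ι a b)).prod μ) := by
  have hcompact : IntegrableOn ↿g ([[a, b]] ×ˢ K) (volume.prod μ) :=
    hg.continuousOn.integrableOn_compact (isCompact_uIcc.prod hK)
  have hstrip : IntegrableOn ↿g ([[a, b]] ×ˢ univ) (volume.prod μ) :=
    hcompact.of_forall_sdiff_eq_zero (measurableSet_uIcc.prod .univ) fun p hp ↦
      by_contra fun hne ↦ hp.2 ⟨hp.1.1, hgK p.1 hp.1.1 hne⟩
  have := hstrip.mono_set (prod_mono_left uIoc_subset_uIcc)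
  rwa [IntegrableOn, ← Measure.prod_restrict, Measure.restrict_univ] at this

theorem integral_sub_eq_intervalIntegral_of_hasDerivAt [NormedSpace ℝ F]
    [CompleteSpace F] {e g : ℝ → X → F} {a b : ℝ} {K : Set X}
    (hK : IsCompact K) (hg : Continuous ↿g)
    (hgK : ∀ t ∈ [[a, b]], support (g t) ⊆ K)
    (he : ∀ t ∈ [[a, b]], ∀ x, HasDerivAt (fun s ↦ e s x) (g t x) t) :
    ∫ x, (e b x - e a x) ∂μ = ∫ t in a..b, ∫ x, g t x ∂μ := by
  rw [intervalIntegral_integral_swap (integrable_uncurry_of_support_subset hK hg hgK)]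
  refine integral_congr_ae (.of_forall fun x ↦ ?_)
  have hgx : Continuous fun t ↦ g t x := by fun_prop
  exact (intervalIntegral.integral_eq_sub_of_hasDerivAt (fun t ht ↦ he t ht x)
    (hgx.intervalIntegrable a b)).symm

end Fubini

section Wave

variable {E : Type*} [NormedAddCommGroup E] [InnerProductSpace ℝ E] [FiniteDimensional ℝ E]

/-- `u` is a `C²` solution of `∂ₜ²u - Δu + V u = 0` for times between `0` and `T`, spatially
supported in the compact set `K` during that time. -/
structure IsCompactlySupportedWave (V : E → ℝ) (u : ℝ → E → ℝ) (T : ℝ) (K : Set E) : Prop where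
  contDiff : ContDiff ℝ 2 ↿u
  wave_eq : ∀ t ∈ [[0, T]], ∀ x, deriv (deriv fun s ↦ u s x) t - Δ (u t) x + V x * u t x = 0
  isCompact : IsCompact K
  support_subset : ∀ t ∈ [[0, T]], support (u t) ⊆ K

/-- The energy density of the primitive `v` of `u`, which solves the wave equation with the static
source `∂ₜu(0, ·)`; the last term accounts for the work of that source. -/
def primitiveEnergyDensity (V : E → ℝ) (u : ℝ → E → ℝ) (t : ℝ) (x : E) : ℝ :=
  1 / 2 * u t x ^ 2 + 1 / 2 * ‖∇ (timePrimitive u t) x‖ ^ 2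
    + 1 / 2 * (V x * timePrimitive u t x ^ 2) - deriv (fun s ↦ u s x) 0 * timePrimitive u t x

/-- The divergence of the energy flux `u ∇v`, where `v` is the primitive of `u`, expanded by the
product rule. -/
def primitiveFluxDivergence (u : ℝ → E → ℝ) (t : ℝ) (x : E) : ℝ :=
  u t x * Δ (timePrimitive u t) x + ⟪∇ (u t) x, ∇ (timePrimitive u t) x⟫_ℝ

lemma continuous_uncurry_primitiveFluxDivergence {u : ℝ → E → ℝ} (hu : ContDiff ℝ 2 ↿u) :
    Continuous ↿(primitiveFluxDivergence u) := by
  have hu₁ : ContDiff ℝ 1 ↿u := hu.of_le one_le_two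
  have hΔv : Continuous ↿(fun t ↦ Δ (timePrimitive u t)) := by
    simpa only [laplacian_timePrimitive hu] using
      continuous_uncurry_timePrimitive (continuous_uncurry_laplacian hu)
  have hgradv : Continuous ↿(fun t ↦ ∇ (timePrimitive u t)) := by
    simpa only [gradient_timePrimitive hu₁] using
      continuous_uncurry_timePrimitive (continuous_uncurry_gradient hu₁)
  exact (hu.continuous.mul hΔv).add ((continuous_uncurry_gradient hu₁).inner hgradv)

lemma support_primitiveFluxDivergence_subset (u : ℝ → E → ℝ) (t : ℝ) :
    support (primitiveFluxDivergence u t) ⊆ tsupport (u t) := by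
  refine support_subset_iff'.2 fun x hx ↦ ?_
  simp [primitiveFluxDivergence, image_eq_zero_of_notMem_tsupport hx,
    gradient_eq_zero_of_notMem_tsupport hx]

theorem integral_primitiveFluxDivergence [MeasurableSpace E] [BorelSpace E] {u : ℝ → E → ℝ}
    (hu : ContDiff ℝ 2 ↿u) {t : ℝ} (hut : HasCompactSupport (u t)) :
    ∫ x, primitiveFluxDivergence u t x = 0 :=
  integral_mul_laplacian_add_inner_gradient volume
    (contDiff_of_uncurry (hu.of_le one_le_two) t) hut (contDiff_two_timePrimitive hu t)

lemma primitiveEnergyDensity_zero (V : E → ℝ) (u : ℝ → E → ℝ) (x : E) :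
    primitiveEnergyDensity V u 0 x = 1 / 2 * u 0 x ^ 2 := by
  have hv : timePrimitive u 0 = fun _ ↦ 0 := funext (timePrimitive_zero u)
  simp [primitiveEnergyDensity, hv]

lemma mul_le_sq_div_add_mul_sq {c : ℝ} (hc : 0 < c) (a b : ℝ) :
    a * b ≤ a ^ 2 / c + 1 / 4 * (c * b ^ 2) := by
  have hsquare : a ^ 2 / c + 1 / 4 * (c * b ^ 2) - a * b = (a - c * b / 2) ^ 2 / c := by
    field_simp
    ring
  have : 0 ≤ (a - c * b / 2) ^ 2 / c := by positivity
  linarith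

lemma le_primitiveEnergyDensity_add {V : E → ℝ} {x : E} (hV : 0 < V x) (u : ℝ → E → ℝ) (t : ℝ) :
    1 / 2 * u t x ^ 2 + 1 / 2 * ‖∇ (timePrimitive u t) x‖ ^ 2
        + 1 / 4 * (V x * timePrimitive u t x ^ 2)
      ≤ primitiveEnergyDensity V u t x + deriv (fun s ↦ u s x) 0 ^ 2 / V x := by
  have := mul_le_sq_div_add_mul_sq hV (deriv (fun s ↦ u s x) 0) (timePrimitive u t x)
  rw [primitiveEnergyDensity]
  linarith

namespace IsCompactlySupportedWave

variable {V : E → ℝ} {u : ℝ → E → ℝ} {T t : ℝ} {K : Set E}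

lemma contDiff_one (h : IsCompactlySupportedWave V u T K) : ContDiff ℝ 1 ↿u :=
  h.contDiff.of_le one_le_two

lemma tsupport_subset (h : IsCompactlySupportedWave V u T K) (ht : t ∈ [[0, T]]) :
    tsupport (u t) ⊆ K :=
  closure_minimal (h.support_subset t ht) h.isCompact.isClosed

lemma hasCompactSupport (h : IsCompactlySupportedWave V u T K) (ht : t ∈ [[0, T]]) :
    HasCompactSupport (u t) :=
  h.isCompact.of_isClosed_subset (isClosed_tsupport _) (h.tsupport_subset ht)

lemma hasCompactSupport_timePrimitive (h : IsCompactlySupportedWave V u T K) :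
    HasCompactSupport (timePrimitive u T) :=
  .intro h.isCompact fun _ hx ↦ timePrimitive_eq_zero fun s hs ↦
    notMem_support.1 fun hsx ↦ hx (h.support_subset s hs hsx)

theorem timePrimitive_wave_eq (h : IsCompactlySupportedWave V u T K) (ht : t ∈ [[0, T]]) (x : E) :
    deriv (fun s ↦ u s x) t - Δ (timePrimitive u t) x + V x * timePrimitive u t x
      = deriv (fun s ↦ u s x) 0 := by
  have hux : ContDiff ℝ 2 fun s ↦ u s x := h.contDiff.comp (contDiff_prodMk_left x)
  have hderiv : ∀ s ∈ [[0, t]], HasDerivAt (fun s ↦ deriv (fun r ↦ u r x) s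
      - timePrimitive (fun r ↦ Δ (u r)) s x + V x * timePrimitive u s x) 0 s := fun s hs ↦ by
    rw [← h.wave_eq s (uIcc_subset_uIcc_left ht hs) x]
    exact ((hux.differentiable_deriv_two s).hasDerivAt.sub
      (hasDerivAt_timePrimitive (continuous_uncurry_laplacian h.contDiff) s x)).add
      ((hasDerivAt_timePrimitive h.contDiff.continuous s x).const_mul (V x))
  have hconst := intervalIntegral.integral_eq_sub_of_hasDerivAt hderiv intervalIntegrable_const
  rw [laplacian_timePrimitive h.contDiff, ← sub_eq_zero]
  simpa using hconst.symm

lemma hasDerivAt_primitiveEnergyDensity (h : IsCompactlySupportedWave V u T K)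
    (ht : t ∈ [[0, T]]) (x : E) :
    HasDerivAt (fun s ↦ primitiveEnergyDensity V u s x) (primitiveFluxDivergence u t x) t := by
  have hu : HasDerivAt (fun s ↦ u s x) (deriv (fun s ↦ u s x) t) t :=
    ((h.contDiff.comp (contDiff_prodMk_left x)).differentiable two_ne_zero t).hasDerivAt
  have hv := hasDerivAt_timePrimitive h.contDiff.continuous t x
  have hgradv : HasDerivAt (fun s ↦ ∇ (timePrimitive u s) x) (∇ (u t) x) t := by
    simpa only [gradient_timePrimitive h.contDiff_one] using
      hasDerivAt_timePrimitive (continuous_uncurry_gradient h.contDiff_one) t x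
  refine (((((hu.pow 2).const_mul (1 / 2)).add (hgradv.norm_sq.const_mul (1 / 2))).add
    (((hv.pow 2).const_mul (V x)).const_mul (1 / 2))).sub (hv.const_mul _)).congr_deriv ?_
  rw [← h.timePrimitive_wave_eq ht x, primitiveFluxDivergence, real_inner_comm]
  ring

variable [MeasurableSpace E] [BorelSpace E]

theorem integral_primitiveEnergyDensity_sub (h : IsCompactlySupportedWave V u T K) :
    ∫ x, (primitiveEnergyDensity V u T x - primitiveEnergyDensity V u 0 x) = 0 := by
  have hflux : ∀ t ∈ [[0, T]], ∫ x, primitiveFluxDivergence u t x = 0 := fun t ht ↦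
    integral_primitiveFluxDivergence h.contDiff (h.hasCompactSupport ht)
  rw [integral_sub_eq_intervalIntegral_of_hasDerivAt h.isCompact
    (continuous_uncurry_primitiveFluxDivergence h.contDiff)
    (fun t ht ↦ (support_primitiveFluxDivergence_subset u t).trans (h.tsupport_subset ht))
    (fun t ht ↦ h.hasDerivAt_primitiveEnergyDensity ht),
    intervalIntegral.integral_congr hflux, intervalIntegral.integral_zero]

lemma integrable_sq (h : IsCompactlySupportedWave V u T K) (ht : t ∈ [[0, T]]) :
    Integrable fun x ↦ u t x ^ 2 := by
  simp only [sq]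
  exact ((contDiff_of_uncurry h.contDiff t).continuous.mul
    (contDiff_of_uncurry h.contDiff t).continuous).integrable_of_hasCompactSupport
      (h.hasCompactSupport ht).mul_right

lemma integrable_norm_gradient_timePrimitive_sq (h : IsCompactlySupportedWave V u T K) :
    Integrable fun x ↦ ‖∇ (timePrimitive u T) x‖ ^ 2 :=
  integrable_norm_gradient_sq (contDiff_one_timePrimitive h.contDiff_one T)
    h.hasCompactSupport_timePrimitive

lemma integrable_mul_timePrimitive (h : IsCompactlySupportedWave V u T K) {f : E → ℝ}
    (hf : Continuous f) : Integrable fun x ↦ f x * timePrimitive u T x :=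
  (hf.mul (contDiff_one_timePrimitive h.contDiff_one T).continuous).integrable_of_hasCompactSupport
    h.hasCompactSupport_timePrimitive.mul_left

-- The integrated equation exhibits `V v` as a continuous function.
lemma integrable_potential_mul_timePrimitive_sq (h : IsCompactlySupportedWave V u T K) :
    Integrable fun x ↦ V x * timePrimitive u T x ^ 2 := by
  have hVv : (fun x ↦ V x * timePrimitive u T x) = fun x ↦ deriv (fun s ↦ u s x) 0
      - deriv (fun s ↦ u s x) T + Δ (timePrimitive u T) x :=
    funext fun x ↦ by linarith [h.timePrimitive_wave_eq right_mem_uIcc x]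
  have hΔv : Continuous (Δ (timePrimitive u T)) := by
    rw [laplacian_timePrimitive h.contDiff]
    exact (continuous_uncurry_timePrimitive (continuous_uncurry_laplacian h.contDiff)).comp
      (Continuous.prodMk_right T)
  have hcont : Continuous fun x ↦ V x * timePrimitive u T x := by
    rw [hVv]
    exact ((continuous_deriv_apply h.contDiff_one 0).sub
      (continuous_deriv_apply h.contDiff_one T)).add hΔv
  simpa only [sq, mul_assoc] using h.integrable_mul_timePrimitive hcont

lemma integrable_primitiveEnergyDensity (h : IsCompactlySupportedWave V u T K) :
    Integrable (primitiveEnergyDensity V u T) :=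
  ((((h.integrable_sq right_mem_uIcc).const_mul _).add
    (h.integrable_norm_gradient_timePrimitive_sq.const_mul _)).add
    (h.integrable_potential_mul_timePrimitive_sq.const_mul _)).sub
    (h.integrable_mul_timePrimitive (continuous_deriv_apply h.contDiff_one 0))

theorem integral_primitiveEnergyDensity (h : IsCompactlySupportedWave V u T K) :
    ∫ x, primitiveEnergyDensity V u T x = 1 / 2 * ∫ x, u 0 x ^ 2 := by
  have h₀ := (h.integrable_sq left_mem_uIcc).const_mul (1 / 2)
  have hsub := h.integral_primitiveEnergyDensity_sub
  simp only [primitiveEnergyDensity_zero] at hsub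
  rwa [integral_sub h.integrable_primitiveEnergyDensity h₀, integral_const_mul, sub_eq_zero] at hsub

end IsCompactlySupportedWave

theorem wave_potential_primitive_estimate_general [MeasurableSpace E] [BorelSpace E] {V : E → ℝ}
    (hV : ∀ x, 0 < V x) {u : ℝ → E → ℝ} {T : ℝ} {K : Set E}
    (h : IsCompactlySupportedWave V u T K)
    (hI : Integrable fun x ↦ deriv (fun s ↦ u s x) 0 ^ 2 / V x) :
    1 / 2 * (∫ x, u T x ^ 2) + 1 / 2 * (∫ x, ‖∇ (timePrimitive u T) x‖ ^ 2)
        + 1 / 4 * (∫ x, V x * timePrimitive u T x ^ 2)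
      ≤ 1 / 2 * (∫ x, u 0 x ^ 2) + ∫ x, deriv (fun s ↦ u s x) 0 ^ 2 / V x := by
  have hu := (h.integrable_sq right_mem_uIcc).const_mul (1 / 2)
  have hgradv := h.integrable_norm_gradient_timePrimitive_sq.const_mul (1 / 2)
  have hVv := h.integrable_potential_mul_timePrimitive_sq.const_mul (1 / 4)
  calc _ = ∫ x, (1 / 2 * u T x ^ 2 + 1 / 2 * ‖∇ (timePrimitive u T) x‖ ^ 2
          + 1 / 4 * (V x * timePrimitive u T x ^ 2)) := by
        rw [integral_add (by exact hu.add hgradv) hVv, integral_add hu hgradv]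
        simp only [integral_const_mul]
    _ ≤ ∫ x, (primitiveEnergyDensity V u T x + deriv (fun s ↦ u s x) 0 ^ 2 / V x) :=
        integral_mono ((hu.add hgradv).add hVv) (h.integrable_primitiveEnergyDensity.add hI)
          fun x ↦ le_primitiveEnergyDensity_add (hV x) u T
    _ = _ := by
        rw [integral_add h.integrable_primitiveEnergyDensity hI, h.integral_primitiveEnergyDensity]

end Wave

lemma lap_eq_laplacian {n : ℕ} (f : EuclideanSpace ℝ (Fin n) → ℝ) : lap f = Δ f := by
  simp [funext_iff, lap,
    laplacian_eq_iteratedFDeriv_orthonormalBasis f (EuclideanSpace.basisFun (Fin n) ℝ)]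

lemma isCompactlySupportedWave_closedBall {n : ℕ} {V : EuclideanSpace ℝ (Fin n) → ℝ}
    {u : ℝ → EuclideanSpace ℝ (Fin n) → ℝ} {T R : ℝ} (hT : 0 ≤ T) (hu : ContDiff ℝ 2 ↿u)
    (hPDE : ∀ t ∈ Icc 0 T, ∀ x, deriv (deriv fun s ↦ u s x) t - lap (u t) x + V x * u t x = 0)
    (hsupp : ∀ t ∈ Icc 0 T, ∀ x, R ≤ ‖x‖ → u t x = 0) :
    IsCompactlySupportedWave V u T (Metric.closedBall 0 R) where
  contDiff := hu
  wave_eq := by simpa only [uIcc_of_le hT, ← lap_eq_laplacian] using hPDE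
  isCompact := isCompact_closedBall 0 R
  support_subset t ht := support_subset_iff'.2 fun x hx ↦
    hsupp t (uIcc_of_le hT ▸ ht) x (by simpa using hx : R < ‖x‖).le

theorem wave_potential_primitive_estimate (n : ℕ) (hn : 1 ≤ n)
    (V : EuclideanSpace ℝ (Fin n) → ℝ)
    (hVcont : Continuous V) (hVbdd : ∃ M, ∀ x, |V x| ≤ M)
    (hVpos : ∀ x, 0 < V x)
    (u : ℝ → EuclideanSpace ℝ (Fin n) → ℝ)
    (u₀ u₁ : EuclideanSpace ℝ (Fin n) → ℝ)
    (hu : ContDiff ℝ (⊤ : ℕ∞) (fun p : ℝ × EuclideanSpace ℝ (Fin n) => u p.1 p.2))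
    (hu₀smooth : ContDiff ℝ (⊤ : ℕ∞) u₀) (hu₀supp : HasCompactSupport u₀)
    (hu₁smooth : ContDiff ℝ (⊤ : ℕ∞) u₁) (hu₁supp : HasCompactSupport u₁)
    (hPDE : ∀ t, 0 ≤ t → ∀ x,
      deriv (fun s => deriv (fun r => u r x) s) t - lap (u t) x + V x * u t x = 0)
    (hinit0 : ∀ x, u 0 x = u₀ x)
    (hinit1 : ∀ x, deriv (fun s => u s x) 0 = u₁ x)
    (hsupp : ∀ T, 0 < T → ∃ R, 0 < R ∧ ∀ t ∈ Set.Icc (0:ℝ) T, ∀ x,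
      R ≤ ‖x‖ → u t x = 0)
    (hI : Integrable (fun x => (u₁ x) ^ 2 / V x))
    (v : ℝ → EuclideanSpace ℝ (Fin n) → ℝ)
    (hv : ∀ t x, v t x = ∫ s in (0:ℝ)..t, u s x) :
    ∀ t, 0 ≤ t →
      (1/2) * (∫ x, (u t x) ^ 2)
        + (1/2) * (∫ x, ‖gradient (v t) x‖ ^ 2)
        + (1/4) * (∫ x, V x * (v t x) ^ 2)
      ≤ (1/2) * (∫ x, (u₀ x) ^ 2) + ∫ x, (u₁ x) ^ 2 / V x := by
  intro T hT
  obtain ⟨R, -, hR⟩ := hsupp (T + 1) (by linarith)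
  obtain rfl : v = timePrimitive u := funext₂ hv
  obtain rfl : u 0 = u₀ := funext hinit0
  obtain rfl : (fun x ↦ deriv (fun s ↦ u s x) 0) = u₁ := funext hinit1
  exact wave_potential_primitive_estimate_general hVpos
    (isCompactlySupportedWave_closedBall hT (contDiff_infty.1 hu 2) (fun t ht ↦ hPDE t ht.1)
      fun t ht ↦ hR t ⟨ht.1, by linarith [ht.2]⟩) hI
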